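/- Let D be a bounded domain in ℝ^d satisfying conditions (A) and (D). Then for every continuous function h : [0,∞) → ℝ^d with h(0) ∈ closure(D), there exists a unique pair (x, k) solving the Skorohod problem (h, D, 𝒩). -/

import Mathlib

open MeasureTheory Set
open scoped RealInnerProductSpace ENNReal

noncomputable section

abbrev Ed (d : ℕ) := EuclideanSpace ℝ (Fin d)

/-- The set `𝒩_{x,r}` of inward unit normals at `x` realized by a ball of radius `r`. -/
def normalCone {d : ℕ} (D : Set (Ed d)) (x : Ed d) (r : ℝ) : Set (Ed d) :=
  {n | ‖n‖ = 1 ∧ Metric.ball (x - r • n) r ∩ D = ∅}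

/-- The set `𝒩_x` of inward unit normals at `x`. -/
def inwardNormals {d : ℕ} (D : Set (Ed d)) (x : Ed d) : Set (Ed d) :=
  ⋃ r > (0:ℝ), normalCone D x r

/-- Condition (A) with constant `r₀`. -/
def CondA {d : ℕ} (D : Set (Ed d)) (r₀ : ℝ) : Prop :=
  0 < r₀ ∧ ∀ x ∈ frontier D,
    inwardNormals D x = normalCone D x r₀ ∧ (normalCone D x r₀).Nonempty

/-- Condition (B) with constants `δ₀`, `β`. -/
def CondB {d : ℕ} (D : Set (Ed d)) (δ₀ β : ℝ) : Prop :=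
  0 < δ₀ ∧ 1 ≤ β ∧ ∀ x ∈ frontier D, ∃ l : Ed d, ‖l‖ = 1 ∧
    ∀ y ∈ Metric.ball x δ₀ ∩ frontier D, ∀ n ∈ inwardNormals D y, (1:ℝ)/β ≤ ⟪l, n⟫

/-- Condition (D) with data `m, lam, R, a, xs`. -/
def CondD {d : ℕ} (D : Set (Ed d)) (m : ℕ) (lam R : ℝ) (a xs : Fin m → Ed d) : Prop :=
  1 ≤ m ∧ 0 < lam ∧ 0 < R ∧ (∀ i, ‖a i‖ = 1) ∧ (∀ i, xs i ∈ frontier D) ∧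
  frontier D ⊆ ⋃ i, Metric.ball (xs i) R ∧
  ∀ x ∈ frontier D, ∀ i, x ∈ Metric.ball (xs i) (2*R) →
    ∀ n ∈ inwardNormals D x, lam ≤ ⟪n, a i⟫

/-- The pair `(x, k)` solves the Skorohod problem `(h, D, 𝒩)` on `[0, T]`. -/
structure IsSkorohodSolution {d : ℕ} (D : Set (Ed d)) (h x k : ℝ → Ed d) (T : ℝ) : Prop where
  h0_mem : h 0 ∈ closure D
  decomp : ∀ t ∈ Icc 0 T, x t = h t + k t
  cont : ContinuousOn x (Icc 0 T)
  mem_closure : ∀ t ∈ Icc 0 T, x t ∈ closure D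
  init : x 0 = h 0
  cont_k : ContinuousOn k (Icc 0 T)
  k_zero : k 0 = 0
  bv : eVariationOn k (Icc 0 T) ≠ ⊤
  reflect : ∃ (μ : Measure ℝ) (n : ℝ → Ed d), Measurable n ∧
    (∀ t ∈ Icc 0 T, μ (Icc 0 t) = eVariationOn k (Icc 0 t)) ∧
    (∀ t ∈ Icc 0 T, k t = ∫ s in Icc 0 t, n s ∂μ) ∧
    (∀ᵐ s ∂(μ.restrict (Icc 0 T)), x s ∈ frontier D ∧ n s ∈ inwardNormals D (x s))

/-- `‖f‖_{[s,t]} = sup_{u,v∈[s,t]} |f u - f v|`. -/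
def oscNorm {E : Type*} [NormedAddCommGroup E] (f : ℝ → E) (s t : ℝ) : ℝ :=
  sSup {c | ∃ u ∈ Icc s t, ∃ v ∈ Icc s t, c = ‖f u - f v‖}

/-- `‖f‖_{[s,t],θ}`: the `θ`-Hölder seminorm on `[s,t]`. -/
def holderSemi {E : Type*} [NormedAddCommGroup E] (f : ℝ → E) (s t θ : ℝ) : ℝ :=
  sSup {c | ∃ u ∈ Icc s t, ∃ v ∈ Icc s t, u ≠ v ∧ c = ‖f u - f v‖ / |u - v| ^ θ}



section Discrete

variable {E : Type*} [NormedAddCommGroup E] [InnerProductSpace ℝ E]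

/-- The correction increment of the discrete scheme. -/
def kap (x h : ℕ → E) (j : ℕ) : E := x (j+1) - x j - (h (j+1) - h j)

/-- The total variation of the discrete correction. -/
def dV (x h : ℕ → E) (q : ℕ) : ℝ := ∑ j ∈ Finset.range q, ‖kap x h j‖

lemma dV_succ (x h : ℕ → E) (q : ℕ) : dV x h (q+1) = dV x h q + ‖kap x h q‖ := by
  simp [dV, Finset.sum_range_succ]

lemma dV_mono (x h : ℕ → E) : Monotone (dV x h) := by
  refine monotone_nat_of_le_succ fun n => ?_
  rw [dV_succ]; linarith [norm_nonneg (kap x h n)]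

/-- The discrete scheme. -/
structure DScheme (K : Set E) (r₀ lam R : ℝ) (x h : ℕ → E) : Prop where
  mem : ∀ j, x j ∈ K
  step : ∀ j, ‖kap x h j‖ ≤ ‖h (j+1) - h j‖
  prox : ∀ j, ∀ y ∈ K, 0 ≤ ⟪y - x (j+1), kap x h j⟫ + ‖y - x (j+1)‖^2/(2*r₀) * ‖kap x h j‖
  dir : ∀ j, kap x h j ≠ 0 → ∃ a : E, ‖a‖ = 1 ∧ ∀ j', ‖x (j'+1) - x (j+1)‖ < R →
    lam * ‖kap x h j'‖ ≤ ⟪kap x h j', a⟫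

variable {K : Set E} {r₀ lam R : ℝ} {x h : ℕ → E}

lemma DScheme.norm_le (p q : ℕ) (hpq : p ≤ q) :
    ‖(x q - h q) - (x p - h p)‖ ≤ dV x h q - dV x h p := by
  induction q, hpq using Nat.le_induction with
  | base => simp
  | succ q hq ih =>
    rw [dV_succ]
    have : (x (q+1) - h (q+1)) - (x p - h p) = ((x q - h q) - (x p - h p)) + kap x h q := by
      simp only [kap]; abel
    rw [this]
    linarith [norm_add_le ((x q - h q) - (x p - h p)) (kap x h q)]

lemma DScheme.energy (S : DScheme K r₀ lam R x h) (hr : 0 < r₀) {M ω : ℝ} (p q : ℕ) (hpq : p ≤ q)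
    (hM : ∀ j, p ≤ j → j ≤ q → ‖x j - x p‖ ≤ M) (hω : ∀ j, p ≤ j → j ≤ q → ‖h j - h p‖ ≤ ω) :
    ‖(x q - h q) - (x p - h p)‖^2 ≤ (M^2/r₀ + 2*ω) * (dV x h q - dV x h p) := by
  induction q, hpq using Nat.le_induction with
  | base => simp
  | succ q hq ih =>
    have ih' := ih (fun j h1 h2 => hM j h1 (by omega)) (fun j h1 h2 => hω j h1 (by omega))
    rw [dV_succ]
    set κ := kap x h q with hκ
    set A := (x (q+1) - h (q+1)) - (x p - h p) with hAdef
    have hA : (x q - h q) - (x p - h p) = A - κ := by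
      simp only [hκ, hAdef, kap]; abel
    rw [hA, norm_sub_sq_real] at ih'
    have h1 : ⟪A, κ⟫ = - ⟪x p - x (q+1), κ⟫ - ⟪h (q+1) - h p, κ⟫ := by
      rw [← inner_neg_left, ← inner_sub_left]; congr 1; simp only [hAdef]; abel
    have h2 := S.prox q (x p) (S.mem p)
    have h3 : -⟪h (q+1) - h p, κ⟫ ≤ ω * ‖κ‖ := by
      have := (abs_le.1 (abs_real_inner_le_norm (h (q+1) - h p) κ)).1
      have := mul_le_mul_of_nonneg_right (hω (q+1) (by omega) le_rfl) (norm_nonneg κ)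
      linarith
    have h4 : ‖x p - x (q+1)‖^2/(2*r₀) * ‖κ‖ ≤ M^2/(2*r₀) * ‖κ‖ := by
      rw [norm_sub_rev]
      have := hM (q+1) (by omega) le_rfl
      gcongr
    have h5 : M^2/(2*r₀) = (M^2/r₀)/2 := by field_simp
    rw [h5] at h4
    have h6 := sq_nonneg ‖κ‖
    nlinarith

lemma DScheme.energy2 (S : DScheme K r₀ lam R x h) (hr : 0 < r₀) {M ω : ℝ} (p q : ℕ) (hpq : p ≤ q)
    (hM : ∀ j, p ≤ j → j ≤ q → ‖x j - x p‖ ≤ M) (hω : ∀ j, p ≤ j → j ≤ q → ‖h j - h p‖ ≤ ω) :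
    ‖x q - x p‖^2 ≤ ω^2 + (M^2/r₀ + 4*ω) * (dV x h q - dV x h p) := by
  have h1 := S.energy hr p q hpq hM hω
  have h2 := DScheme.norm_le (x := x) (h := h) p q hpq
  set A := (x q - h q) - (x p - h p) with hA
  have h3 : x q - x p = (h q - h p) + A := by rw [hA]; abel
  rw [h3, norm_add_sq_real]
  have h4 := hω q hpq le_rfl
  have h5 := real_inner_le_norm (h q - h p) A
  have h6 : ‖h q - h p‖ * ‖A‖ ≤ ω * (dV x h q - dV x h p) := by gcongr; exact (norm_nonneg _).trans h4
  have h7 : ‖h q - h p‖^2 ≤ ω^2 := by gcongr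
  linarith

lemma DScheme.var_le (S : DScheme K r₀ lam R x h) (hl : 0 < lam) {ρ ω : ℝ} (hρ : 2*ρ < R)
    (p q : ℕ) (hpq : p ≤ q)
    (hM : ∀ j, p ≤ j → j ≤ q → ‖x j - x p‖ ≤ ρ) (hω : ∀ j, p ≤ j → j ≤ q → ‖h j - h p‖ ≤ ω) :
    dV x h q - dV x h p ≤ (ρ + ω)/lam := by
  have hρ0 : 0 ≤ ρ := (norm_nonneg _).trans (hM p le_rfl hpq)
  have hω0 : 0 ≤ ω := (norm_nonneg _).trans (hω p le_rfl hpq)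
  by_cases hz : ∀ j, p ≤ j → j < q → kap x h j = 0
  · have : ∀ q', p ≤ q' → q' ≤ q → dV x h q' = dV x h p := by
      intro q' hq'
      induction q', hq' using Nat.le_induction with
      | base => simp
      | succ n hn ih =>
        intro h1
        rw [dV_succ, ih (by omega), hz n hn (by omega)]; simp
    rw [this q hpq le_rfl, sub_self]; positivity
  · push Not at hz
    obtain ⟨j, hj1, hj2, hj3⟩ := hz
    obtain ⟨a, ha, hdir⟩ := S.dir j hj3
    have key : ∀ q', p ≤ q' → q' ≤ q →
        lam * (dV x h q' - dV x h p) ≤ ⟪(x q' - h q') - (x p - h p), a⟫ := by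
      intro q' hq'
      induction q', hq' using Nat.le_induction with
      | base => simp
      | succ n hn ih =>
        intro h1
        have e : (x (n+1) - h (n+1)) - (x p - h p) = ((x n - h n) - (x p - h p)) + kap x h n := by
          simp only [kap]; abel
        rw [dV_succ, e, inner_add_left]
        have h2 := hdir n (by
          have e1 := hM (n+1) (by omega) h1
          have e2 := hM (j+1) (by omega) (by omega)
          have : x (n+1) - x (j+1) = (x (n+1) - x p) - (x (j+1) - x p) := by abel
          rw [this]
          linarith [norm_sub_le (x (n+1) - x p) (x (j+1) - x p)])
        have h3 := ih (by omega)
        linarith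
    rw [le_div_iff₀ hl, mul_comm]
    refine (key q hpq le_rfl).trans ((real_inner_le_norm _ _).trans ?_)
    rw [ha, mul_one]
    have : (x q - h q) - (x p - h p) = (x q - x p) - (h q - h p) := by abel
    rw [this]
    linarith [norm_sub_le (x q - x p) (h q - h p), hM q hpq le_rfl, hω q hpq le_rfl]

/-- Uniform modulus of continuity of the discrete scheme. -/
lemma DScheme.modulus (hr : 0 < r₀) (hl : 0 < lam) (hR : 0 < R) {ε : ℝ} (hε : 0 < ε) :
    ∃ ω > 0, ∀ (x h : ℕ → E), DScheme K r₀ lam R x h → ∀ p q, p ≤ q →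
      (∀ j, p ≤ j → j ≤ q → ‖h j - h p‖ ≤ ω) →
      (∀ j, p ≤ j → j ≤ q → ‖x j - x p‖ ≤ ε) ∧ dV x h q - dV x h p ≤ ε := by
  obtain ⟨ρ, hρ0, h1, h2, h3, h4⟩ : ∃ ρ > 0, ρ ≤ ε ∧ ρ ≤ lam*ε/2 ∧ ρ ≤ R/4 ∧ ρ ≤ lam*r₀/16 := by
    refine ⟨min (min ε (lam*ε/2)) (min (R/4) (lam*r₀/16)), by positivity, ?_, ?_, ?_, ?_⟩
    · exact (min_le_left _ _).trans (min_le_left _ _)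
    · exact (min_le_left _ _).trans (min_le_right _ _)
    · exact (min_le_right _ _).trans (min_le_left _ _)
    · exact (min_le_right _ _).trans (min_le_right _ _)
  obtain ⟨ω, hω0, g1, g2⟩ : ∃ ω > 0, ω ≤ ρ/8 ∧ ω ≤ lam*ρ/128 :=
    ⟨min (ρ/8) (lam*ρ/128), by positivity, min_le_left _ _, min_le_right _ _⟩
  refine ⟨ω, hω0, fun x h S p q hpq hω => ?_⟩
  have key : ∀ n, p ≤ n → n ≤ q → ∀ j, p ≤ j → j ≤ n → ‖x j - x p‖ ≤ ρ/2 := by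
    intro n hn
    induction n, hn using Nat.le_induction with
    | base =>
      intro _ j e1 e2
      obtain rfl : j = p := by omega
      simp; positivity
    | succ n hn ih =>
      intro hnq
      have ih' := ih (by omega)
      have s1 : ‖h (n+1) - h n‖ ≤ 2*ω := by
        have : h (n+1) - h n = (h (n+1) - h p) - (h n - h p) := by abel
        rw [this]
        linarith [norm_sub_le (h (n+1) - h p) (h n - h p), hω (n+1) (by omega) hnq, hω n hn (by omega)]
      have s2 : ‖x (n+1) - x p‖ ≤ ρ := by
        have : x (n+1) - x p = (x n - x p) + kap x h n + (h (n+1) - h n) := by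
          simp only [kap]; abel
        rw [this]
        have a1 := norm_add_le ((x n - x p) + kap x h n) (h (n+1) - h n)
        have a2 := norm_add_le (x n - x p) (kap x h n)
        have a3 := S.step n
        have a4 := ih' n hn le_rfl
        linarith
      have s3 : ∀ j, p ≤ j → j ≤ n+1 → ‖x j - x p‖ ≤ ρ := by
        intro j e1 e2
        rcases Nat.lt_or_ge n j with e3 | e3
        · obtain rfl : j = n+1 := by omega
          exact s2
        · linarith [ih' j e1 e3]
      have s4 : ∀ j, p ≤ j → j ≤ n+1 → ‖h j - h p‖ ≤ ω := fun j e1 e2 => hω j e1 (by omega)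
      have s5 := S.var_le hl (by linarith) p (n+1) (by omega) s3 s4
      have s6 := S.energy2 hr p (n+1) (by omega) s3 s4
      intro j e1 e2
      rcases Nat.lt_or_ge n j with e3 | e3
      · obtain rfl : j = n+1 := by omega
        refine le_of_sq_le_sq ?_ (by positivity)
        refine s6.trans ?_
        have t1 : (ρ^2/r₀ + 4*ω) * (dV x h (n+1) - dV x h p) ≤ (ρ^2/r₀ + 4*ω) * ((ρ+ω)/lam) := by
          gcongr
        have t2 : (ρ^2/r₀) * ((ρ+ω)/lam) ≤ ρ^2/8 := by
          rw [div_mul_div_comm, div_le_div_iff₀ (by positivity) (by norm_num)]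
          have : (ρ+ω)*8 ≤ r₀*lam := by nlinarith
          nlinarith [sq_nonneg ρ, mul_le_mul_of_nonneg_left this (sq_nonneg ρ)]
        have t3 : (4*ω) * ((ρ+ω)/lam) ≤ ρ^2/16 := by
          rw [← mul_div_assoc, div_le_div_iff₀ (by positivity) (by norm_num)]
          have : ω * (ρ+ω) ≤ (lam*ρ/128) * (2*ρ) := by gcongr; linarith
          nlinarith
        have t4 : ω^2 ≤ (ρ/8)^2 := by gcongr
        have t5 : (ρ^2/r₀ + 4*ω) * ((ρ+ω)/lam) = (ρ^2/r₀) * ((ρ+ω)/lam) + (4*ω) * ((ρ+ω)/lam) := by ring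
        nlinarith
      · exact ih' j e1 e3
  have k1 := key q hpq le_rfl
  have k2 : ∀ j, p ≤ j → j ≤ q → ‖x j - x p‖ ≤ ρ := fun j e1 e2 => (k1 j e1 e2).trans (by linarith)
  refine ⟨fun j e1 e2 => (k2 j e1 e2).trans h1, ?_⟩
  refine (S.var_le hl (by linarith) p q hpq k2 hω).trans ?_
  rw [div_le_iff₀ hl]
  linarith

lemma DScheme.star (S : DScheme K r₀ lam R x h) (hr : 0 < r₀) {L η : ℝ}
    (hL : ∀ y ∈ K, ∀ z ∈ K, ‖y - z‖ ≤ L) {y z : E} (hy : y ∈ K) (hz : z ∈ K) (p q : ℕ) (hpq : p ≤ q)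
    (hη : ∀ j, p ≤ j → j ≤ q → ‖x j - z‖ ≤ η) :
    0 ≤ ⟪y - z, (x q - h q) - (x p - h p)⟫ + (‖y - z‖^2/(2*r₀) + (1 + L/r₀)*η) *
      (dV x h q - dV x h p) := by
  induction q, hpq using Nat.le_induction with
  | base => simp
  | succ q hq ih =>
    have ih' := ih (fun j h1 h2 => hη j h1 (by omega))
    have e : (x (q+1) - h (q+1)) - (x p - h p) = ((x q - h q) - (x p - h p)) + kap x h q := by
      simp only [kap]; abel
    rw [dV_succ, e, inner_add_right]
    set κ := kap x h q
    have h2 := S.prox q y hy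
    have h3 := hη (q+1) (by omega) le_rfl
    have hη0 : 0 ≤ η := (norm_nonneg _).trans h3
    have e2 : ⟪y - x (q+1), κ⟫ = ⟪y - z, κ⟫ - ⟪x (q+1) - z, κ⟫ := by
      rw [← inner_sub_left]; congr 1; abel
    have h4 : - ⟪x (q+1) - z, κ⟫ ≤ η * ‖κ‖ := by
      have := (abs_le.1 (abs_real_inner_le_norm (x (q+1) - z) κ)).1
      have := mul_le_mul_of_nonneg_right h3 (norm_nonneg κ)
      linarith
    have h5 : ‖y - x (q+1)‖^2 ≤ ‖y - z‖^2 + 2*L*η := by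
      have a1 := hL y hy _ (S.mem (q+1))
      have a2 := hL y hy z hz
      have a3 : ‖y - x (q+1)‖ ≤ ‖y - z‖ + η := by
        have : y - x (q+1) = (y - z) - (x (q+1) - z) := by abel
        rw [this]; linarith [norm_sub_le (y - z) (x (q+1) - z)]
      nlinarith [norm_nonneg (y - x (q+1)), norm_nonneg (y - z)]
    have h6 : ‖y - x (q+1)‖^2/(2*r₀) * ‖κ‖ ≤ (‖y - z‖^2/(2*r₀) + L/r₀*η) * ‖κ‖ := by
      gcongr
      have : ‖y - z‖^2/(2*r₀) + L/r₀*η = (‖y - z‖^2 + 2*L*η)/(2*r₀) := by field_simp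
      rw [this]; gcongr
    nlinarith

end Discrete


section Geometry
variable {d : ℕ} {D : Set (Ed d)}

lemma normalCone_prox {x n y : Ed d} {r : ℝ} (hr : 0 < r) (hn : n ∈ normalCone D x r)
    (hy : y ∈ closure D) : 0 ≤ ⟪y - x, n⟫ + ‖y - x‖^2/(2*r) := by
  obtain ⟨hn1, hn2⟩ := hn
  have hcl : closure D ⊆ {y | r ≤ dist y (x - r • n)} := by
    refine closure_minimal ?_ (isClosed_le continuous_const (by fun_prop))
    intro y hy
    by_contra hlt
    simp only [mem_ofPred_eq, not_le] at hlt
    have : y ∈ Metric.ball (x - r • n) r ∩ D := ⟨hlt, hy⟩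
    rw [hn2] at this; exact this
  have h1 : r ≤ ‖(y - x) + r • n‖ := by
    have := hcl hy
    simp only [mem_ofPred_eq, dist_eq_norm] at this
    rwa [show (y - x) + r • n = y - (x - r • n) by abel]
  have h2 : r^2 ≤ ‖(y - x) + r • n‖^2 := by gcongr
  rw [norm_add_sq_real, norm_smul, hn1, inner_smul_right, Real.norm_of_nonneg hr.le] at h2
  have h3 : 0 ≤ (2*r) * (⟪y - x, n⟫ + ‖y - x‖^2/(2*r)) := by
    have : (2*r) * (⟪y - x, n⟫ + ‖y - x‖^2/(2*r)) = 2*r*⟪y - x, n⟫ + ‖y - x‖^2 := by field_simp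
    rw [this]; nlinarith
  exact nonneg_of_mul_nonneg_right h3 (by positivity)

/-- converse: a proximal inequality gives a normal vector. -/
lemma normalCone_of_prox {x n : Ed d} {c : ℝ} (hc : 0 < c) (hn : ‖n‖ = 1)
    (hp : ∀ y ∈ D, 0 ≤ ⟪y - x, n⟫ + ‖y - x‖^2 * c) : n ∈ inwardNormals D x := by
  simp only [inwardNormals, mem_iUnion]
  refine ⟨1/(2*c), by positivity, hn, ?_⟩
  ext y
  simp only [mem_inter_iff, mem_empty_iff_false, iff_false, not_and, Metric.mem_ball, dist_eq_norm]
  intro h1 hy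
  set r := 1/(2*c) with hr
  have hr0 : 0 < r := by positivity
  have e : y - (x - r • n) = (y - x) + r • n := by abel
  rw [e] at h1
  have h2 : ‖(y - x) + r • n‖^2 < r^2 := by gcongr
  rw [norm_add_sq_real, norm_smul, hn, inner_smul_right, Real.norm_of_nonneg hr0.le] at h2
  have h3 := hp y hy
  have h4 : 2*r*c = 1 := by rw [hr]; field_simp
  have h5 : 0 ≤ 2*r*(⟪y - x, n⟫ + ‖y - x‖^2 * c) := by positivity
  nlinarith

lemma frontier_of_inwardNormal (hD : IsOpen D) {x n : Ed d} (hx : x ∈ closure D)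
    (hn : n ∈ inwardNormals D x) : x ∈ frontier D := by
  simp only [inwardNormals, mem_iUnion] at hn
  obtain ⟨r, hr, hn1, hn2⟩ := hn
  rw [hD.frontier_eq]
  refine ⟨hx, fun hxD => ?_⟩
  have h1 : x ∈ closure (Metric.ball (x - r • n) r) := by
    rw [closure_ball _ (ne_of_gt hr)]
    simp [norm_smul, hn1, abs_of_pos hr]
  obtain ⟨y, hy1, hy2⟩ := mem_closure_iff.1 h1 D hD hxD
  have : y ∈ Metric.ball (x - r • n) r ∩ D := ⟨hy2, hy1⟩
  rw [hn2] at this; exact this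

lemma proj_normal {z z' : Ed d} (hmin : ∀ y ∈ closure D, dist z z' ≤ dist z y)
    (hne : z' - z ≠ 0) : ‖z' - z‖⁻¹ • (z' - z) ∈ inwardNormals D z' := by
  simp only [inwardNormals, mem_iUnion]
  have hpos : 0 < ‖z' - z‖ := norm_pos_iff.2 hne
  refine ⟨‖z' - z‖, hpos, ?_, ?_⟩
  · rw [norm_smul, norm_inv, norm_norm, inv_mul_cancel₀ hpos.ne']
  · rw [smul_smul, mul_inv_cancel₀ hpos.ne', one_smul, sub_sub_cancel]
    ext y
    simp only [mem_inter_iff, mem_empty_iff_false, iff_false, not_and, Metric.mem_ball]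
    intro h1 hy
    have := hmin y (subset_closure hy)
    rw [dist_comm z z', dist_eq_norm, dist_comm z y] at this
    linarith

lemma exists_scheme (hD_open : IsOpen D) (hD_bdd : Bornology.IsBounded D)
    {r₀ : ℝ} (hA : CondA D r₀)
    {m : ℕ} {lam R : ℝ} {a xs : Fin m → Ed d} (hDD : CondD D m lam R a xs)
    (h : ℕ → Ed d) (h0 : h 0 ∈ closure D) :
    ∃ x : ℕ → Ed d, x 0 = h 0 ∧ DScheme (closure D) r₀ lam R x h := by
  have hK : IsCompact (closure D) := hD_bdd.isCompact_closure
  have hP : ∀ z : Ed d, ∃ z' ∈ closure D, ∀ y ∈ closure D, dist z z' ≤ dist z y := by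
    intro z
    obtain ⟨z', h1, h2⟩ := hK.exists_isMinOn ⟨_, h0⟩
      (f := fun y => dist z y) (by fun_prop)
    exact ⟨z', h1, fun y hy => h2 hy⟩
  choose P hP1 hP2 using hP
  let x : ℕ → Ed d := fun n => Nat.rec (h 0) (fun j v => P (v + (h (j+1) - h j))) n
  have hx0 : x 0 = h 0 := rfl
  have hxs : ∀ j, x (j+1) = P (x j + (h (j+1) - h j)) := fun j => rfl
  have hmem : ∀ j, x j ∈ closure D := by
    intro j
    cases j with
    | zero => exact h0
    | succ j => rw [hxs]; exact hP1 _
  have hkap : ∀ j, kap x h j = x (j+1) - (x j + (h (j+1) - h j)) := fun j => by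
    simp only [kap]; abel
  have hnorm : ∀ j, kap x h j ≠ 0 → ‖kap x h j‖⁻¹ • kap x h j ∈ inwardNormals D (x (j+1)) := by
    intro j hj
    rw [hkap] at hj ⊢
    have := proj_normal (D := D) (z := x j + (h (j+1) - h j)) (z' := x (j+1))
      (by rw [hxs]; exact hP2 _) hj
    exact this
  have hfr : ∀ j, kap x h j ≠ 0 → x (j+1) ∈ frontier D := fun j hj =>
    frontier_of_inwardNormal hD_open (hmem (j+1)) (hnorm j hj)
  obtain ⟨hm, hl, hR, ha, hxsf, hcov, hdir⟩ := hDD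
  refine ⟨x, hx0, ⟨hmem, ?_, ?_, ?_⟩⟩
  · intro j
    have := hP2 (x j + (h (j+1) - h j)) (x j) (hmem j)
    rw [← hxs, dist_comm, dist_eq_norm, ← hkap, dist_eq_norm] at this
    simpa using this
  · intro j y hy
    by_cases hj : kap x h j = 0
    · simp [hj]
    have h1 := hnorm j hj
    rw [(hA.2 _ (hfr j hj)).1] at h1
    have h2 := normalCone_prox hA.1 h1 hy
    have hpos : 0 < ‖kap x h j‖ := norm_pos_iff.2 hj
    rw [inner_smul_right] at h2
    have h3 : 0 ≤ ‖kap x h j‖ * (‖kap x h j‖⁻¹ * ⟪y - x (j+1), kap x h j⟫ +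
      ‖y - x (j+1)‖^2/(2*r₀)) := by positivity
    rw [mul_add, mul_inv_cancel_left₀ hpos.ne'] at h3
    linarith
  · intro j hj
    have h1 := hcov (hfr j hj)
    simp only [mem_iUnion] at h1
    obtain ⟨i, hi⟩ := h1
    refine ⟨a i, ha i, fun j' hj' => ?_⟩
    by_cases hz : kap x h j' = 0
    · simp [hz]
    have h2 : x (j'+1) ∈ Metric.ball (xs i) (2*R) := by
      rw [Metric.mem_ball] at hi ⊢
      rw [← dist_eq_norm] at hj'
      linarith [dist_triangle (x (j'+1)) (x (j+1)) (xs i)]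
    have h3 := hdir _ (hfr j' hz) i h2 _ (hnorm j' hz)
    have hpos : 0 < ‖kap x h j'‖ := norm_pos_iff.2 hz
    rw [real_inner_smul_left, inv_mul_eq_div, le_div_iff₀ hpos] at h3
    exact h3

end Geometry


section Limit
open Filter Topology

/-- grid index -/
def gi (N : ℕ) (t : ℝ) : ℕ := ⌊max t 0 * ((N:ℝ)+1)⌋₊

lemma gi_le (N : ℕ) (t : ℝ) : (gi N t : ℝ)/((N:ℝ)+1) ≤ max t 0 := by
  rw [div_le_iff₀ (by positivity)]
  exact Nat.floor_le (by positivity)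

lemma lt_gi (N : ℕ) (t : ℝ) : max t 0 - 1/((N:ℝ)+1) ≤ (gi N t : ℝ)/((N:ℝ)+1) := by
  rw [sub_le_iff_le_add, ← add_div, le_div_iff₀ (by positivity)]
  exact (Nat.lt_floor_add_one _).le

lemma gi_mono (N : ℕ) : Monotone (gi N) := by
  intro s t hst
  unfold gi
  gcongr

lemma gi_nonpos (N : ℕ) {t : ℝ} (ht : t ≤ 0) : gi N t = 0 := by
  simp [gi, max_eq_right ht]

variable {d : ℕ} {K : Set (Ed d)}

lemma scheme_modulus {r₀ lam R : ℝ} (hr : 0 < r₀) (hl : 0 < lam) (hR : 0 < R)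
    (h : ℝ → Ed d) (hc : Continuous h) (X : ℕ → ℕ → Ed d)
    (hX : ∀ N, DScheme K r₀ lam R (X N) (fun j => h (j/((N:ℝ)+1))))
    (T : ℝ) {ε : ℝ} (hε : 0 < ε) :
    ∃ δ > 0, ∀ᶠ N : ℕ in atTop, ∀ s t : ℝ, s ≤ t → t ≤ T → t - s ≤ δ →
      (∀ j, gi N s ≤ j → j ≤ gi N t → ‖X N j - X N (gi N s)‖ ≤ ε) ∧
      dV (X N) (fun j => h (j/((N:ℝ)+1))) (gi N t) -
        dV (X N) (fun j => h (j/((N:ℝ)+1))) (gi N s) ≤ ε := by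
  obtain ⟨ω, hω, hmod⟩ := DScheme.modulus (K := K) hr hl hR hε
  have huc := (isCompact_Icc (a := (0:ℝ)) (b := max T 0)).uniformContinuousOn_of_continuous
    hc.continuousOn
  rw [Metric.uniformContinuousOn_iff_le] at huc
  obtain ⟨δ, hδ, huc⟩ := huc ω hω
  refine ⟨δ/2, by positivity, ?_⟩
  have hlim : ∀ᶠ N : ℕ in atTop, 1/((N:ℝ)+1) < δ/2 :=
    tendsto_one_div_add_atTop_nhds_zero_nat.eventually_lt_const (by positivity)
  filter_upwards [hlim] with N hN s t hst htT hd
  refine hmod _ _ (hX N) _ _ (gi_mono N hst) ?_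
  intro j h1 h2
  have hN1 : (0:ℝ) < (N:ℝ)+1 := by positivity
  have a1 : (gi N s : ℝ)/((N:ℝ)+1) ≤ (j:ℝ)/((N:ℝ)+1) := by gcongr
  have a2 : (j : ℝ)/((N:ℝ)+1) ≤ (gi N t:ℝ)/((N:ℝ)+1) := by gcongr
  have a3 := gi_le N t
  have a4 := lt_gi N s
  have a5 : max t 0 ≤ max T 0 := by gcongr
  have a6 : max t 0 - max s 0 ≤ t - s := by
    rcases le_total t 0 with q | q <;> rcases le_total s 0 with q' | q' <;> simp [*] <;> linarith
  have a7 : 0 ≤ (gi N s : ℝ)/((N:ℝ)+1) := by positivity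
  have := huc ((j:ℝ)/((N:ℝ)+1)) ⟨by linarith, by linarith⟩ ((gi N s : ℝ)/((N:ℝ)+1))
    ⟨by linarith, by linarith⟩ (by
      rw [Real.dist_eq, abs_of_nonneg (by linarith)]; linarith)
  rwa [dist_eq_norm] at this

lemma exists_limit {D : Set (Ed d)} (hD_open : IsOpen D) (hD_bdd : Bornology.IsBounded D)
    {r₀ : ℝ} (hA : CondA D r₀)
    {m : ℕ} {lam R : ℝ} {a xs : Fin m → Ed d} (hDD : CondD D m lam R a xs)
    (h : ℝ → Ed d) (hc : Continuous h) (hneg : ∀ t ≤ 0, h t = h 0) (h0 : h 0 ∈ closure D) :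
    ∃ (x : ℝ → Ed d) (V : ℝ → ℝ), Continuous x ∧ Continuous V ∧ Monotone V ∧
      (∀ t, x t ∈ closure D) ∧ (∀ t ≤ 0, x t = h 0) ∧
      (∀ s t, s ≤ t → ‖(x t - h t) - (x s - h s)‖ ≤ V t - V s) ∧
      (∀ u, ∀ η > 0, ∃ δ > 0, ∀ r, 0 < r → r ≤ δ → ∀ y ∈ closure D,
        0 ≤ ⟪y - x u, (x (u+r) - h (u+r)) - (x (u-r) - h (u-r))⟫ +
          (‖y - x u‖^2/(2*r₀) + η) * (V (u+r) - V (u-r))) := by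
  have hr : 0 < r₀ := hA.1
  have hl : 0 < lam := hDD.2.1
  have hR : 0 < R := hDD.2.2.1
  have hK : IsCompact (closure D) := hD_bdd.isCompact_closure
  have hex : ∀ N : ℕ, ∃ x : ℕ → Ed d, x 0 = h 0 ∧
      DScheme (closure D) r₀ lam R x (fun j => h (j/((N:ℝ)+1))) := by
    intro N
    obtain ⟨x, hx0, hx⟩ := exists_scheme hD_open hD_bdd hA hDD (fun j : ℕ => h (j/((N:ℝ)+1)))
      (by simpa using h0)
    exact ⟨x, by simpa using hx0, hx⟩
  choose X hX0 hX using hex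
  have hmod := scheme_modulus hr hl hR h hc X hX
  let W : ℕ → ℝ → ℝ := fun N t => dV (X N) (fun j => h (j/((N:ℝ)+1))) (gi N t)
  have hWmono : ∀ N, Monotone (W N) := fun N s t hst => dV_mono _ _ (gi_mono N hst)
  have hW0 : ∀ N, ∀ t ≤ 0, W N t = 0 := fun N t ht => by simp [W, gi_nonpos N ht, dV]
  have hWbdd : ∀ t, ∃ B : ℝ, ∀ᶠ N in atTop, W N t ∈ Icc 0 B := by
    intro T
    obtain ⟨δ, hδ, hev⟩ := hmod T one_pos
    obtain ⟨n, hn⟩ := exists_nat_ge (T/δ)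
    refine ⟨n, ?_⟩
    filter_upwards [hev] with N hN
    have key : ∀ n : ℕ, ∀ t ≤ T, t ≤ n*δ → W N t ≤ n := by
      intro n
      induction n with
      | zero => intro t _ h2; rw [hW0 N t (by simpa using h2)]; simp
      | succ n ih =>
        intro t h1 h2
        push_cast at h2 ⊢
        have := (hN (t-δ) t (by linarith) h1 (by linarith)).2
        have := ih (t-δ) (by linarith) (by linarith)
        simp only [W] at *
        linarith
    refine ⟨?_, key n T le_rfl (by rwa [div_le_iff₀ hδ] at hn)⟩
    exact Finset.sum_nonneg fun _ _ => norm_nonneg _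
  let U : Ultrafilter ℕ := Ultrafilter.of atTop
  have hU : (U : Filter ℕ) ≤ atTop := Ultrafilter.of_le _
  have hxl : ∀ t, ∃ v ∈ closure D, Tendsto (fun N => X N (gi N t)) U (𝓝 v) := by
    intro t
    exact hK.ultrafilter_le_nhds (U.map fun N => X N (gi N t))
      (by
        rw [le_principal_iff]
        exact (Filter.Eventually.of_forall (fun N => (hX N).mem _) :
          ∀ᶠ N in (U : Filter ℕ), X N (gi N t) ∈ closure D))
  have hVl : ∀ t, ∃ v, Tendsto (fun N => W N t) U (𝓝 v) := by
    intro t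
    obtain ⟨B, hB⟩ := hWbdd t
    obtain ⟨v, -, hv⟩ := (isCompact_Icc (a := (0:ℝ)) (b := B)).ultrafilter_le_nhds (U.map fun N => W N t)
      (by
        rw [le_principal_iff]
        exact hU hB)
    exact ⟨v, hv⟩
  choose x hxmem hx using hxl
  choose V hV using hVl
  have hgl : ∀ t, Tendsto (fun N : ℕ => h ((gi N t : ℝ)/((N:ℝ)+1))) U (𝓝 (h t)) := by
    intro t
    have e : h t = h (max t 0) := by
      rcases le_total t 0 with q | q
      · rw [max_eq_right q, hneg t q]
      · rw [max_eq_left q]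
    rw [e]
    refine ((hc.tendsto _).comp ?_).mono_left hU
    refine tendsto_of_tendsto_of_tendsto_of_le_of_le (g := fun N : ℕ => max t 0 - 1/((N:ℝ)+1))
      (h := fun _ => max t 0) ?_ tendsto_const_nhds (fun N => lt_gi N t) (fun N => gi_le N t)
    simpa using (tendsto_const_nhds (x := max t 0)).sub (tendsto_one_div_add_atTop_nhds_zero_nat (𝕜 := ℝ))
  have hmodl : ∀ T, ∀ ε > 0, ∃ δ > 0, ∀ s t : ℝ, s ≤ t → t ≤ T → t - s ≤ δ →
      ‖x t - x s‖ ≤ ε ∧ V t - V s ≤ ε := by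
    intro T ε hε
    obtain ⟨δ, hδ, hev⟩ := hmod T hε
    refine ⟨δ, hδ, fun s t h1 h2 h3 => ⟨?_, ?_⟩⟩
    · refine le_of_tendsto ((hx t).sub (hx s)).norm (hU ?_)
      filter_upwards [hev] with N hN
      exact (hN s t h1 h2 h3).1 _ (gi_mono N h1) le_rfl
    · refine le_of_tendsto ((hV t).sub (hV s)) (hU ?_)
      filter_upwards [hev] with N hN
      exact (hN s t h1 h2 h3).2
  have hVmono : Monotone V := fun s t hst =>
    le_of_tendsto_of_tendsto' (hV s) (hV t) (fun N => hWmono N hst)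
  refine ⟨x, V, ?_, ?_, hVmono, hxmem, ?_, ?_, ?_⟩
  · rw [Metric.continuous_iff]
    intro u ε hε
    obtain ⟨δ, hδ, hm⟩ := hmodl (u+1) (ε/2) (by positivity)
    refine ⟨min δ 1, by positivity, fun t ht => ?_⟩
    rw [Real.dist_eq, lt_min_iff] at ht
    have := abs_lt.1 ht.1; have := abs_lt.1 ht.2
    rcases le_total u t with q | q
    · rw [dist_eq_norm]; linarith [(hm u t q (by linarith) (by linarith)).1]
    · rw [dist_comm, dist_eq_norm]; linarith [(hm t u q (by linarith) (by linarith)).1]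
  · rw [Metric.continuous_iff]
    intro u ε hε
    obtain ⟨δ, hδ, hm⟩ := hmodl (u+1) (ε/2) (by positivity)
    refine ⟨min δ 1, by positivity, fun t ht => ?_⟩
    rw [Real.dist_eq, lt_min_iff] at ht
    have := abs_lt.1 ht.1; have := abs_lt.1 ht.2
    rcases le_total u t with q | q
    · rw [Real.dist_eq, abs_of_nonneg (by linarith [hVmono q])]
      linarith [(hm u t q (by linarith) (by linarith)).2]
    · rw [dist_comm, Real.dist_eq, abs_of_nonneg (by linarith [hVmono q])]
      linarith [(hm t u q (by linarith) (by linarith)).2]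
  · intro t ht
    refine tendsto_nhds_unique (hx t) ?_
    simp only [gi_nonpos _ ht, hX0]
    exact tendsto_const_nhds
  · intro s t hst
    refine le_of_tendsto_of_tendsto' (((hx t).sub (hgl t)).sub ((hx s).sub (hgl s))).norm
      ((hV t).sub (hV s)) (fun N => ?_)
    exact DScheme.norm_le (x := X N) (h := fun j => h (j/((N:ℝ)+1))) _ _ (gi_mono N hst)
  · intro u η hη
    obtain ⟨L, hL⟩ := Metric.isBounded_iff.1 hK.isBounded
    have hL0 : 0 ≤ L := by simpa using hL h0 h0
    set C := 1 + L/r₀ with hC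
    have hC0 : 0 < C := by positivity
    obtain ⟨δ, hδ, hev⟩ := hmod (u+1) (ε := η/(2*C)) (by positivity)
    refine ⟨min (δ/2) 1, by positivity, fun r hr0 hr1 y hy => ?_⟩
    rw [le_min_iff] at hr1
    have hlim := ((tendsto_const_nhds (x := y)).sub (hx u)).inner (𝕜 := ℝ)
      (((hx (u+r)).sub (hgl (u+r))).sub ((hx (u-r)).sub (hgl (u-r))))
    have hlim2 := hlim.add ((((((tendsto_const_nhds (x := y)).sub (hx u)).norm.pow 2).div_const
      (2*r₀)).add_const η).mul ((hV (u+r)).sub (hV (u-r))))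
    refine ge_of_tendsto hlim2 (hU ?_)
    filter_upwards [hev] with N hN
    have h1 := hN (u-r) (u+r) (by linarith) (by linarith) (by linarith)
    have hm1 : gi N (u-r) ≤ gi N u := gi_mono N (by linarith)
    have hm2 : gi N u ≤ gi N (u+r) := gi_mono N (by linarith)
    have := (hX N).star hr (L := L) (η := η/C) (fun y hy z hz => by
      rw [← dist_eq_norm]; exact hL hy hz) hy ((hX N).mem (gi N u)) _ _ (hm1.trans hm2) (by
        intro j e1 e2
        have b1 := h1.1 j e1 e2
        have b2 := h1.1 _ hm1 hm2
        have e : X N j - X N (gi N u) = (X N j - X N (gi N (u-r))) - (X N (gi N u) - X N (gi N (u-r))) := by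
          abel
        rw [e]
        have b3 := norm_sub_le (X N j - X N (gi N (u-r))) (X N (gi N u) - X N (gi N (u-r)))
        have b4 : η/C = η/(2*C) + η/(2*C) := by field_simp; ring
        linarith)
    rw [← hC, mul_div_cancel₀ η hC0.ne'] at this
    exact this

end Limit


section MeasurePart
open Filter Topology

lemma evar_le {E : Type*} [NormedAddCommGroup E] (k : ℝ → E) (Q : ℝ → ℝ) (a b : ℝ) (hab : a ≤ b)
    (hkQ : ∀ s t, a ≤ s → s ≤ t → t ≤ b → ‖k t - k s‖ ≤ Q t - Q s) :
    eVariationOn k (Icc a b) ≤ ENNReal.ofReal (Q b - Q a) := by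
  have hQ : ∀ s t, a ≤ s → s ≤ t → t ≤ b → Q s ≤ Q t := fun s t h1 h2 h3 => by
    linarith [hkQ s t h1 h2 h3, norm_nonneg (k t - k s)]
  unfold eVariationOn
  refine iSup_le ?_
  rintro ⟨n, u, hu, hmem⟩
  have h1 : ∀ i, edist (k (u (i+1))) (k (u i)) ≤ ENNReal.ofReal (Q (u (i+1)) - Q (u i)) := by
    intro i
    rw [edist_dist, dist_eq_norm]
    exact ENNReal.ofReal_le_ofReal (hkQ _ _ (hmem i).1 (hu (Nat.le_succ i)) (hmem (i+1)).2)
  calc ∑ i ∈ Finset.range n, edist (k (u (i+1))) (k (u i))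
      ≤ ∑ i ∈ Finset.range n, ENNReal.ofReal (Q (u (i+1)) - Q (u i)) := Finset.sum_le_sum fun i _ => h1 i
    _ = ENNReal.ofReal (∑ i ∈ Finset.range n, (Q (u (i+1)) - Q (u i))) := by
        rw [ENNReal.ofReal_sum_of_nonneg]
        intro i _
        linarith [hQ _ _ (hmem i).1 (hu (Nat.le_succ i)) (hmem (i+1)).2]
    _ = ENNReal.ofReal (Q (u n) - Q (u 0)) := by rw [Finset.sum_range_sub (fun i => Q (u i))]
    _ ≤ _ := by
        apply ENNReal.ofReal_le_ofReal
        linarith [hQ _ _ (hmem n).1 (hmem n).2 le_rfl, hQ _ _ le_rfl (hmem 0).1 (hmem 0).2]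

/-- Radon–Nikodym density of a function dominated by a Stieltjes function. -/
lemma exists_density (W : StieltjesFunction ℝ) (f : ℝ → ℝ) (hf : Continuous f)
    (hW : ∀ s t, s ≤ t → |f t - f s| ≤ W t - W s) :
    ∃ g : ℝ → ℝ, Measurable g ∧ (∀ a b, IntegrableOn g (Icc a b) W.measure) ∧
      ∀ s t, s ≤ t → f t - f s = ∫ u in Ioc s t, g u ∂W.measure := by
  let F : StieltjesFunction ℝ :=
    ⟨fun t => W t + f t, fun s t hst => by
      have := abs_le.1 (hW s t hst)
      simp only; linarith, fun t => (W.right_continuous t).add hf.continuousWithinAt⟩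
  let G : StieltjesFunction ℝ :=
    ⟨fun t => W t - f t, fun s t hst => by
      have := abs_le.1 (hW s t hst)
      simp only; linarith, fun t => (W.right_continuous t).sub hf.continuousWithinAt⟩
  have hFG : F + G = W + W := by
    ext t
    change (W t + f t) + (W t - f t) = W t + W t
    ring
  have hm : F.measure + G.measure = W.measure + W.measure := by
    rw [← StieltjesFunction.measure_add, hFG, StieltjesFunction.measure_add]
  have hac : F.measure ≪ W.measure := by
    intro s hs
    have := congrArg (fun m : Measure ℝ => m s) hm
    simp only [Measure.add_apply, hs, add_zero] at this
    exact (add_eq_zero.1 this).1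
  have hfin : ∀ a b, F.measure (Icc a b) ≠ ⊤ := fun a b => isCompact_Icc.measure_lt_top.ne
  have hi1 : ∀ a b, IntegrableOn (fun u => (F.measure.rnDeriv W.measure u).toReal) (Icc a b) W.measure :=
    fun a b => Measure.integrableOn_toReal_rnDeriv (hfin a b)
  have hi2 : ∀ a b, IntegrableOn (fun _ => (1:ℝ)) (Icc a b) W.measure := fun a b =>
    integrableOn_const isCompact_Icc.measure_lt_top.ne
  refine ⟨fun u => (F.measure.rnDeriv W.measure u).toReal - 1, ?_, ?_, ?_⟩
  · exact (Measure.measurable_rnDeriv _ _).ennreal_toReal.sub_const _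
  · intro a b
    exact (hi1 a b).sub (hi2 a b)
  · intro s t hst
    rw [integral_sub ((hi1 s t).mono_set Ioc_subset_Icc_self) ((hi2 s t).mono_set Ioc_subset_Icc_self),
      Measure.setIntegral_toReal_rnDeriv hac, setIntegral_const, Measure.real, Measure.real,
      StieltjesFunction.measure_Ioc, StieltjesFunction.measure_Ioc,
      ENNReal.toReal_ofReal (sub_nonneg.2 (F.mono hst)), ENNReal.toReal_ofReal (sub_nonneg.2 (W.mono hst))]
    change f t - f s = (W t + f t) - (W s + f s) - (W t - W s) • 1
    simp only [smul_eq_mul, mul_one]; ring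

lemma exists_density_vec {d : ℕ} (W : StieltjesFunction ℝ) (k : ℝ → Ed d) (hk : Continuous k)
    (hW : ∀ s t, s ≤ t → ‖k t - k s‖ ≤ W t - W s) :
    ∃ n : ℝ → Ed d, Measurable n ∧ (∀ a b, IntegrableOn n (Icc a b) W.measure) ∧
      ∀ s t, s ≤ t → k t - k s = ∫ u in Ioc s t, n u ∂W.measure := by
  have h1 : ∀ i : Fin d, ∃ g : ℝ → ℝ, Measurable g ∧ (∀ a b, IntegrableOn g (Icc a b) W.measure) ∧
      ∀ s t, s ≤ t → k t i - k s i = ∫ u in Ioc s t, g u ∂W.measure := by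
    intro i
    refine exists_density W (fun t => k t i) (by fun_prop) (fun s t hst => ?_)
    refine le_trans ?_ (hW s t hst)
    have := PiLp.norm_apply_le (k t - k s) i
    simpa using this
  choose g hg1 hg2 hg3 using h1
  have hInt : ∀ a b, ∀ i, IntegrableOn (fun u => g i u • (EuclideanSpace.single i (1:ℝ) : Ed d)) (Icc a b) W.measure :=
    fun a b i => (hg2 i a b).smul_const _
  refine ⟨fun u => ∑ i, g i u • (EuclideanSpace.single i (1:ℝ) : Ed d), ?_, ?_, ?_⟩
  · exact Finset.measurable_sum _ fun i _ => (hg1 i).smul_const _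
  · intro a b
    exact integrable_finsetSum _ fun i _ => hInt a b i
  · intro s t hst
    rw [integral_finsetSum _ fun i _ => (hInt s t i).mono_set Ioc_subset_Icc_self]
    simp_rw [integral_smul_const, ← hg3 _ s t hst]
    ext j
    simp [Finset.sum_apply, Pi.single_apply]

lemma exists_reflect {d : ℕ} (k : ℝ → Ed d) (V : ℝ → ℝ) (hk : Continuous k) (hV : Continuous V)
    (hVm : Monotone V) (hkV : ∀ s t, s ≤ t → ‖k t - k s‖ ≤ V t - V s) (hk0 : ∀ t ≤ 0, k t = 0) :
    ∃ (μ : Measure ℝ) (n : ℝ → Ed d) (w : ℝ → ℝ → ℝ), Measurable n ∧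
      (∀ t, 0 ≤ t → μ (Icc 0 t) = eVariationOn k (Icc 0 t)) ∧
      (∀ t, 0 ≤ t → k t = ∫ s in Icc 0 t, n s ∂μ) ∧
      (∀ T, 0 ≤ T → ∀ᵐ s ∂(μ.restrict (Icc 0 T)), ‖n s‖ = 1) ∧
      (∀ u r, 0 ≤ w u r) ∧
      ∀ᵐ u ∂μ, ∃ c : ℝ, Tendsto (fun r => w u r • (k (u+r) - k (u-r))) (𝓝[>] 0) (𝓝 (n u)) ∧
        Tendsto (fun r => w u r * (V (u+r) - V (u-r))) (𝓝[>] 0) (𝓝 c) := by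
  -- the variation function
  have hfin : ∀ a b, eVariationOn k (Icc a b) ≠ ⊤ := by
    intro a b
    rcases le_or_gt a b with hab | hab
    · exact ((evar_le k V a b hab fun s t _ h _ => hkV s t h).trans_lt ENNReal.ofReal_lt_top).ne
    · rw [Icc_eq_empty hab.not_ge, eVariationOn.subsingleton _ subsingleton_empty]; simp
  let w0 : ℝ → ℝ := fun t => (eVariationOn k (Icc 0 t)).toReal
  have hw0 : ∀ t ≤ 0, w0 t = 0 := by
    intro t ht
    simp only [w0]
    rw [eVariationOn.subsingleton]; · rfl
    intro x hx y hy
    have h1 := hx.1; have h2 := hx.2; have h3 := hy.1; have h4 := hy.2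
    linarith
  have hadd : ∀ s t, 0 ≤ s → s ≤ t → w0 t - w0 s = (eVariationOn k (Icc s t)).toReal := by
    intro s t hs hst
    have := eVariationOn.Icc_add_Icc k hs hst (mem_univ s)
    simp only [univ_inter] at this
    simp only [w0]
    rw [← this, ENNReal.toReal_add (hfin _ _) (hfin _ _)]; ring
  have hle1 : ∀ s t, 0 ≤ s → s ≤ t → ‖k t - k s‖ ≤ w0 t - w0 s := by
    intro s t hs hst
    rw [hadd s t hs hst, ← dist_eq_norm, dist_edist]
    exact ENNReal.toReal_mono (hfin _ _) (eVariationOn.edist_le k (right_mem_Icc.2 hst) (left_mem_Icc.2 hst))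
  have hle2 : ∀ s t, 0 ≤ s → s ≤ t → w0 t - w0 s ≤ V t - V s := by
    intro s t hs hst
    rw [hadd s t hs hst]
    refine ENNReal.toReal_le_of_le_ofReal (sub_nonneg.2 (hVm hst)) ?_
    exact evar_le k V s t hst fun s t _ h _ => hkV s t h
  have hmaxw : ∀ t, w0 t = w0 (max t 0) := by
    intro t
    rcases le_total t 0 with q | q
    · rw [max_eq_right q, hw0 t q, hw0 0 le_rfl]
    · rw [max_eq_left q]
  have hmaxk : ∀ t, k t = k (max t 0) := by
    intro t
    rcases le_total t 0 with q | q
    · rw [max_eq_right q, hk0 t q, hk0 0 le_rfl]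
    · rw [max_eq_left q]
  have hkw : ∀ s t, s ≤ t → ‖k t - k s‖ ≤ w0 t - w0 s := by
    intro s t hst
    rw [hmaxw s, hmaxw t, hmaxk s, hmaxk t]
    exact hle1 _ _ (le_max_right _ _) (max_le_max hst le_rfl)
  have hwmono : Monotone w0 := fun s t hst => by linarith [hkw s t hst, norm_nonneg (k t - k s)]
  have hwcont : Continuous w0 := by
    have hcont : Continuous fun t => V (max t 0) := hV.comp (by fun_prop)
    rw [Metric.continuous_iff] at hcont ⊢
    intro b ε hε
    obtain ⟨δ, hδ, H⟩ := hcont b ε hε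
    refine ⟨δ, hδ, fun t ht => lt_of_le_of_lt ?_ (H t ht)⟩
    have aux : ∀ s t, s ≤ t → |w0 t - w0 s| ≤ |V (max t 0) - V (max s 0)| := by
      intro s t hst
      rw [abs_of_nonneg (sub_nonneg.2 (hwmono hst)), hmaxw s, hmaxw t]
      exact (hle2 _ _ (le_max_right _ _) (max_le_max hst le_rfl)).trans (le_abs_self _)
    simp only [Real.dist_eq]
    rcases le_total b t with q | q
    · exact aux b t q
    · rw [abs_sub_comm, abs_sub_comm (V _)]; exact aux t b q
  let W : StieltjesFunction ℝ := ⟨w0, hwmono, fun t => hwcont.continuousWithinAt⟩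
  let VS : StieltjesFunction ℝ := ⟨V, hVm, fun t => hV.continuousWithinAt⟩
  have hWl : ∀ t, Function.leftLim W t = w0 t := fun t =>
    ContinuousWithinAt.leftLim_eq (f := w0) hwcont.continuousWithinAt
  have hVl : ∀ t, Function.leftLim VS t = V t := fun t =>
    ContinuousWithinAt.leftLim_eq (f := V) hV.continuousWithinAt
  have hWIcc : ∀ a b, W.measure (Icc a b) = ENNReal.ofReal (w0 b - w0 a) := by
    intro a b; rw [StieltjesFunction.measure_Icc, hWl]
  have hVIcc : ∀ a b, VS.measure (Icc a b) = ENNReal.ofReal (V b - V a) := by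
    intro a b; rw [StieltjesFunction.measure_Icc, hVl]
  have : NullSingletonClass W.measure := ⟨fun a => by
    rw [StieltjesFunction.measure_singleton, hWl]; change ENNReal.ofReal (w0 a - w0 a) = 0; simp⟩
  obtain ⟨n, hn1, hn2, hn3⟩ := exists_density_vec W k hk hkw
  have hloc : LocallyIntegrable n W.measure := by
    rw [locallyIntegrable_iff]
    intro K hK
    obtain ⟨r, hr⟩ := hK.isBounded.subset_closedBall 0
    rw [Real.closedBall_eq_Icc] at hr
    exact (hn2 _ _).mono_set hr
  have hav : ∀ᵐ u ∂W.measure, Tendsto (fun r => (w0 (u+r) - w0 (u-r))⁻¹ • (k (u+r) - k (u-r)))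
      (𝓝[>] 0) (𝓝 (n u)) := by
    filter_upwards [(Besicovitch.vitaliFamily W.measure).ae_tendsto_average hloc] with u hu
    have := hu.comp (Besicovitch.tendsto_filterAt W.measure u)
    refine this.congr' ?_
    filter_upwards [self_mem_nhdsWithin] with r hr
    have hr' : (0:ℝ) < r := hr
    simp only [Function.comp]
    rw [setAverage_eq, Real.closedBall_eq_Icc, integral_Icc_eq_integral_Ioc,
      ← hn3 _ _ (by linarith), Measure.real, hWIcc, ENNReal.toReal_ofReal]
    exact sub_nonneg.2 (hwmono (by linarith))
  have hle : ∀ᵐ u ∂W.measure, ‖n u‖ ≤ 1 := by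
    filter_upwards [hav] with u hu
    refine le_of_tendsto hu.norm ?_
    filter_upwards [self_mem_nhdsWithin] with r hr
    have hr' : (0:ℝ) < r := hr
    have h1 := hkw (u-r) (u+r) (by linarith)
    rw [norm_smul, norm_inv, Real.norm_of_nonneg ((norm_nonneg _).trans h1), inv_mul_eq_div]
    exact div_le_one_of_le₀ h1 ((norm_nonneg _).trans h1)
  refine ⟨W.measure, n, fun u r => |w0 (u+r) - w0 (u-r)|⁻¹, hn1, ?_, ?_, ?_, fun u r => by positivity, ?_⟩
  · intro t ht
    rw [hWIcc, hw0 0 le_rfl, sub_zero, ENNReal.ofReal_toReal (hfin 0 t)]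
  · intro t ht
    rw [integral_Icc_eq_integral_Ioc, ← hn3 0 t ht, hk0 0 le_rfl, sub_zero]
  · intro T hT
    rw [← restrict_Ioc_eq_restrict_Icc]
    have hnI : ∀ a b, IntegrableOn (fun u => ‖n u‖) (Ioc a b) W.measure := fun a b =>
      ((hn2 a b).mono_set Ioc_subset_Icc_self).norm
    have h1I : IntegrableOn (fun _ => (1:ℝ)) (Ioc 0 T) W.measure :=
      (integrableOn_const isCompact_Icc.measure_lt_top.ne).mono_set Ioc_subset_Icc_self
    have hQ := evar_le k (fun t => ∫ u in Ioc 0 t, ‖n u‖ ∂W.measure) 0 T hT (by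
      intro s t hs hst htT
      have : ∫ u in Ioc 0 t, ‖n u‖ ∂W.measure =
          (∫ u in Ioc 0 s, ‖n u‖ ∂W.measure) + ∫ u in Ioc s t, ‖n u‖ ∂W.measure := by
        rw [← Ioc_union_Ioc_eq_Ioc hs hst]
        exact setIntegral_union (Ioc_disjoint_Ioc_of_le le_rfl) measurableSet_Ioc (hnI 0 s) (hnI s t)
      simp only [this, add_sub_cancel_left]
      rw [hn3 s t hst]
      exact norm_integral_le_integral_norm _)
    simp only [Ioc_self, Measure.restrict_empty, integral_zero_measure, sub_zero] at hQ
    have hQ2 : w0 T ≤ ∫ u in Ioc 0 T, ‖n u‖ ∂W.measure :=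
      ENNReal.toReal_le_of_le_ofReal (integral_nonneg fun _ => norm_nonneg _) hQ
    have hnn : 0 ≤ᵐ[W.measure.restrict (Ioc 0 T)] fun u => 1 - ‖n u‖ := by
      filter_upwards [ae_restrict_of_ae hle] with u hu
      simpa using hu
    have hz : ∫ u in Ioc 0 T, (1 - ‖n u‖) ∂W.measure = 0 := by
      refine le_antisymm ?_ (integral_nonneg_of_ae hnn)
      rw [integral_sub h1I (hnI 0 T), setIntegral_const, Measure.real, StieltjesFunction.measure_Ioc]
      change (ENNReal.ofReal (w0 T - w0 0)).toReal • (1:ℝ) - _ ≤ 0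
      rw [hw0 0 le_rfl, sub_zero, ENNReal.toReal_ofReal ENNReal.toReal_nonneg]
      simp only [smul_eq_mul, mul_one]
      linarith
    rw [integral_eq_zero_iff_of_nonneg_ae hnn (h1I.sub (hnI 0 T))] at hz
    filter_upwards [hz] with u hu
    simp only [Pi.zero_apply] at hu
    linarith
  · filter_upwards [hav, Besicovitch.ae_tendsto_rnDeriv VS.measure W.measure,
      Measure.rnDeriv_lt_top VS.measure W.measure] with u h1 h2 h3
    refine ⟨(VS.measure.rnDeriv W.measure u).toReal, ?_, ?_⟩
    · refine h1.congr' ?_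
      filter_upwards [self_mem_nhdsWithin] with r hr
      have hr' : (0:ℝ) < r := hr
      rw [abs_of_nonneg (sub_nonneg.2 (hwmono (by linarith)))]
    · have h4 := (ENNReal.tendsto_toReal h3.ne).comp h2
      refine h4.congr' ?_
      filter_upwards [self_mem_nhdsWithin] with r hr
      have hr' : (0:ℝ) < r := hr
      have e1 : 0 ≤ w0 (u+r) - w0 (u-r) := sub_nonneg.2 (hwmono (by linarith))
      have e2 : 0 ≤ V (u+r) - V (u-r) := sub_nonneg.2 (hVm (by linarith))
      simp only [Function.comp]
      rw [abs_of_nonneg e1, Real.closedBall_eq_Icc, hWIcc, hVIcc, ENNReal.toReal_div,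
        ENNReal.toReal_ofReal e1, ENNReal.toReal_ofReal e2, inv_mul_eq_div]

end MeasurePart


section Uniqueness
open Filter Topology

lemma sq_norm_diff {E : Type*} [NormedAddCommGroup E] [InnerProductSpace ℝ E] (p q : E) :
    ‖p‖^2 - ‖q‖^2 = ⟪p + q, p - q⟫ := by
  rw [inner_add_left, inner_sub_right, inner_sub_right, real_inner_self_eq_norm_sq,
    real_inner_self_eq_norm_sq, real_inner_comm p q]; ring

lemma local_to_global (F H : ℝ → ℝ) (a b δ : ℝ) (hab : a ≤ b) (hδ : 0 < δ)
    (hloc : ∀ s t, a ≤ s → s ≤ t → t ≤ b → t - s ≤ δ → F t - F s ≤ H t - H s) :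
    F b - F a ≤ H b - H a := by
  have key : ∀ n : ℕ, ∀ t, a ≤ t → t ≤ b → t - a ≤ n*δ → F t - F a ≤ H t - H a := by
    intro n
    induction n with
    | zero =>
      intro t h1 h2 h3
      have : t = a := by simp at h3; linarith
      subst this; simp
    | succ n ih =>
      intro t h1 h2 h3
      push_cast at h3
      rcases le_total (t - δ) a with q | q
      · exact hloc a t le_rfl h1 h2 (by linarith)
      · have e1 := ih (t-δ) q (by linarith) (by linarith)
        have e2 := hloc (t-δ) t q (by linarith) h2 (by linarith)
        linarith
  obtain ⟨n, hn⟩ := exists_nat_ge ((b-a)/δ)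
  exact key n b hab le_rfl (by rwa [div_le_iff₀ hδ] at hn)

variable {d : ℕ} {D : Set (Ed d)}

lemma sol_local {r₀ : ℝ} (hA : CondA D r₀) {h x k : ℝ → Ed d} {T : ℝ} (hT : 0 < T)
    (S : IsSkorohodSolution D h x k T) :
    ∃ G : ℝ → ℝ, Monotone G ∧ (∀ s, Tendsto (fun t => G t - G s) (𝓝[>] s) (𝓝 0)) ∧
      ∀ s t, 0 ≤ s → s ≤ t → t ≤ T → ∀ (v : Ed d) (c : ℝ),
        (∀ u ∈ Icc s t, ∀ n ∈ normalCone D (x u) r₀, ⟪v, n⟫ ≤ c) →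
        ⟪v, k t - k s⟫ ≤ c * (G t - G s) := by
  obtain ⟨μ, n, hn, hμ, hk, hae⟩ := S.reflect
  have hfin : μ (Icc 0 T) ≠ ⊤ := by
    rw [hμ T ⟨hT.le, le_rfl⟩]; exact S.bv
  set ρ := μ.restrict (Icc 0 T) with hρ
  haveI : IsFiniteMeasure ρ := ⟨by rw [hρ, Measure.restrict_apply_univ]; exact hfin.lt_top⟩
  have hGd : ∀ s t, s ≤ t → ρ.real (Iic t) - ρ.real (Iic s) = ρ.real (Ioc s t) := by
    intro s t hst
    rw [← Iic_union_Ioc_eq_Iic hst, measureReal_union (Iic_disjoint_Ioc le_rfl) measurableSet_Ioc]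
    ring
  have hae' : ∀ᵐ u ∂ρ, n u ∈ normalCone D (x u) r₀ := by
    filter_upwards [hae] with u hu
    rw [← (hA.2 _ hu.1).1]; exact hu.2
  have hnint : Integrable n ρ := by
    refine Integrable.of_bound hn.aestronglyMeasurable 1 ?_
    filter_upwards [hae'] with u hu
    exact hu.1.le
  have hk' : ∀ t, 0 ≤ t → t ≤ T → k t = ∫ u in Icc 0 t, n u ∂ρ := by
    intro t h0 h1
    rw [hk t ⟨h0, h1⟩, hρ, Measure.restrict_restrict measurableSet_Icc,
      inter_eq_left.2 (Icc_subset_Icc_right h1)]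
  refine ⟨fun t => ρ.real (Iic t), fun s t hst => measureReal_mono (Iic_subset_Iic.2 hst), ?_, ?_⟩
  · intro s
    have h1 := tendsto_measure_biInter_gt (μ := ρ) (s := fun r => Ioc s r) (a := s)
      (fun r _ => measurableSet_Ioc.nullMeasurableSet)
      (fun i j _ hij => Ioc_subset_Ioc_right hij) ⟨s+1, by simp, measure_ne_top _ _⟩
    have h2 : ⋂ r > s, Ioc s r = ∅ := by
      ext u
      simp only [mem_iInter, mem_empty_iff_false, iff_false]
      intro hu
      have e1 := (hu (s+1) (by simp)).1
      have e2 := (hu ((s+u)/2) (by simp; linarith)).2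
      linarith
    rw [h2, measure_empty] at h1
    have h3 := (ENNReal.tendsto_toReal (by simp)).comp h1
    refine h3.congr' ?_
    filter_upwards [self_mem_nhdsWithin] with t ht
    exact (hGd s t (le_of_lt ht)).symm
  · intro s t h0 hst htT v c hc
    have e1 : k t - k s = ∫ u in Ioc s t, n u ∂ρ := by
      rw [hk' t (h0.trans hst) htT, hk' s h0 (hst.trans htT),
        ← Icc_union_Ioc_eq_Icc h0 hst, setIntegral_union ?_ measurableSet_Ioc hnint.integrableOn hnint.integrableOn]
      · abel
      · rw [Set.disjoint_left]
        intro u hu hu'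
        exact absurd hu.2 (not_le.2 hu'.1)
    simp only [e1]
    rw [hGd s t hst, ← integral_inner hnint.integrableOn v]
    have e2 : ∫ u in Ioc s t, c ∂ρ = c * ρ.real (Ioc s t) := by
      rw [setIntegral_const, smul_eq_mul, mul_comm]
    rw [← e2]
    refine integral_mono_ae (hnint.integrableOn.const_inner v) (integrable_const c) ?_
    filter_upwards [ae_restrict_of_ae hae', ae_restrict_mem measurableSet_Ioc] with u h1 h2
    exact hc u (Ioc_subset_Icc_self h2) _ h1

lemma sol_unique {r₀ : ℝ} (hA : CondA D r₀) {h x k x' k' : ℝ → Ed d} {T : ℝ} (hT : 0 < T)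
    (S : IsSkorohodSolution D h x k T) (S' : IsSkorohodSolution D h x' k' T) :
    ∀ t ∈ Icc 0 T, x' t = x t := by
  have hr := hA.1
  obtain ⟨G₁, hG1m, hG1r, hG1⟩ := sol_local hA hT S
  obtain ⟨G₂, hG2m, hG2r, hG2⟩ := sol_local hA hT S'
  set f : ℝ → Ed d := fun t => x t - x' t with hf
  have hfc : ContinuousOn f (Icc 0 T) := S.cont.sub S'.cont
  set G : ℝ → ℝ := fun t => G₁ t + G₂ t with hG
  have hGm : Monotone G := fun s t hst => add_le_add (hG1m hst) (hG2m hst)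
  have hdf : ∀ s t, 0 ≤ s → s ≤ t → t ≤ T → f t - f s = (k t - k s) - (k' t - k' s) := by
    intro s t h0 h1 h2
    simp only [hf, S.decomp t ⟨h0.trans h1, h2⟩, S.decomp s ⟨h0, h1.trans h2⟩,
      S'.decomp t ⟨h0.trans h1, h2⟩, S'.decomp s ⟨h0, h1.trans h2⟩]
    abel
  have claim : ∀ s t B, 0 ≤ s → s ≤ t → t ≤ T → (∀ u ∈ Icc s t, ‖f u‖^2 ≤ B) →
      ‖f t‖^2 - ‖f s‖^2 ≤ B/r₀ * (G t - G s) := by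
    intro s t B h0 hst htT hB
    have heps : ∀ ε > 0, ‖f t‖^2 - ‖f s‖^2 ≤ (B/r₀ + 2*ε) * (G t - G s) := by
      intro ε hε
      have huc := (isCompact_Icc (a := (0:ℝ)) (b := T)).uniformContinuousOn_of_continuous hfc
      rw [Metric.uniformContinuousOn_iff_le] at huc
      obtain ⟨δ, hδ, huc⟩ := huc ε hε
      have := local_to_global (fun t => ‖f t‖^2) (fun t => (B/r₀ + 2*ε) * G t) s t δ hst hδ (by
        intro a b ha hab hb hd
        have ha0 : 0 ≤ a := h0.trans ha
        have hbT : b ≤ T := hb.trans htT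
        have hosc : ∀ u ∈ Icc a b, ∀ n : Ed d, ‖n‖ = 1 →
            |⟪f b - f u, n⟫| ≤ ε ∧ |⟪f a - f u, n⟫| ≤ ε := by
          intro u hu n hn
          have hu0 : u ∈ Icc 0 T := ⟨ha0.trans hu.1, hu.2.trans hbT⟩
          constructor
          · refine (abs_real_inner_le_norm _ _).trans ?_
            rw [hn, mul_one, ← dist_eq_norm]
            exact huc _ ⟨ha0.trans hab, hbT⟩ _ hu0 (by
              rw [Real.dist_eq, abs_of_nonneg (by linarith [hu.2])]; linarith [hu.1])
          · refine (abs_real_inner_le_norm _ _).trans ?_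
            rw [hn, mul_one, ← dist_eq_norm]
            exact huc _ ⟨ha0, hab.trans hbT⟩ _ hu0 (by
              rw [dist_comm, Real.dist_eq, abs_of_nonneg (by linarith [hu.1])]; linarith [hu.2])
        have hexp : ∀ u n, ⟪f b + f a, n⟫ = 2*⟪f u, n⟫ + ⟪f b - f u, n⟫ + ⟪f a - f u, n⟫ := by
          intro u n
          simp only [inner_add_left, inner_sub_left]; ring
        have hBr : ∀ u ∈ Icc a b, 2*(‖f u‖^2/(2*r₀)) ≤ B/r₀ := by
          intro u hu
          have : 2*(‖f u‖^2/(2*r₀)) = ‖f u‖^2/r₀ := by field_simp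
          rw [this]
          have := hB u ⟨ha.trans hu.1, hu.2.trans hb⟩
          gcongr
        have e1 := hG1 a b ha0 hab hbT (f b + f a) (B/r₀ + 2*ε) (by
          intro u hu n hn
          have hu0 : u ∈ Icc 0 T := ⟨ha0.trans hu.1, hu.2.trans hbT⟩
          have p1 := normalCone_prox hr hn (S'.mem_closure u hu0)
          have p2 : x' u - x u = - f u := by simp [hf]
          rw [p2, inner_neg_left, norm_neg] at p1
          obtain ⟨q1, q2⟩ := hosc u hu n hn.1
          rw [hexp u n]
          linarith [(abs_le.1 q1).2, (abs_le.1 q2).2, hBr u hu])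
        have e2 := hG2 a b ha0 hab hbT (-(f b + f a)) (B/r₀ + 2*ε) (by
          intro u hu n hn
          have hu0 : u ∈ Icc 0 T := ⟨ha0.trans hu.1, hu.2.trans hbT⟩
          have p1 := normalCone_prox hr hn (S.mem_closure u hu0)
          have p2 : x u - x' u = f u := rfl
          rw [p2] at p1
          obtain ⟨q1, q2⟩ := hosc u hu n hn.1
          rw [inner_neg_left, hexp u n]
          linarith [(abs_le.1 q1).1, (abs_le.1 q2).1, hBr u hu])
        have e3 : ‖f b‖^2 - ‖f a‖^2 = ⟪f b + f a, f b - f a⟫ := sq_norm_diff _ _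
        rw [e3, hdf a b ha0 hab hbT, inner_sub_right]
        rw [inner_neg_left] at e2
        simp only [hG]
        linarith)
      linarith
    have hlim : Tendsto (fun ε : ℝ => (B/r₀ + 2*ε) * (G t - G s)) (𝓝[>] 0)
        (𝓝 ((B/r₀ + 2*0) * (G t - G s))) := by
      refine Tendsto.mono_left ?_ nhdsWithin_le_nhds
      exact Continuous.tendsto (by fun_prop) 0
    rw [mul_zero, add_zero] at hlim
    refine ge_of_tendsto hlim ?_
    filter_upwards [self_mem_nhdsWithin] with ε hε using heps ε hε
  have hsub : Icc 0 T ⊆ {t | f t = 0} := by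
    refine IsClosed.Icc_subset_of_forall_exists_gt ?_ ?_ ?_
    · rw [inter_comm]
      exact hfc.preimage_isClosed_of_isClosed isClosed_Icc isClosed_singleton
    · simp [hf, S.decomp 0 ⟨le_rfl, hT.le⟩, S'.decomp 0 ⟨le_rfl, hT.le⟩, S.k_zero, S'.k_zero]
    · rintro s ⟨hs0, hs1, hs2⟩ y hy
      have hfs : f s = 0 := hs0
      have hGr : Tendsto (fun t => G t - G s) (𝓝[>] s) (𝓝 0) := by
        have := (hG1r s).add (hG2r s)
        rw [add_zero] at this
        refine this.congr fun t => ?_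
        simp only [hG]; ring
      have hev := (hGr.eventually_lt_const (show (0:ℝ) < r₀/2 by positivity)).and
        ((Ioc_mem_nhdsGT (show s < min y T from lt_min hy hs2)))
      obtain ⟨t, ht1, ht2⟩ := hev.exists
      have hty : t ≤ y := ht2.2.trans (min_le_left _ _)
      have htT : t ≤ T := ht2.2.trans (min_le_right _ _)
      refine ⟨t, ?_, ht2.1, hty⟩
      have hcont : ContinuousOn (fun u => ‖f u‖^2) (Icc s t) :=
        ((hfc.mono (Icc_subset_Icc hs1 htT)).norm.pow 2)
      obtain ⟨t1, ht1m, hmax⟩ := isCompact_Icc.exists_isMaxOn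
        ⟨s, left_mem_Icc.2 ht2.1.le⟩ hcont
      have hmax' : ∀ u ∈ Icc s t, ‖f u‖^2 ≤ ‖f t1‖^2 := fun u hu => hmax hu
      have c1 := claim s t1 (‖f t1‖^2) hs1 ht1m.1 (ht1m.2.trans htT)
        (fun u hu => hmax' u ⟨hu.1, hu.2.trans ht1m.2⟩)
      rw [hfs, norm_zero] at c1
      have c2 : G t1 - G s ≤ r₀/2 := by linarith [hGm ht1m.2]
      have c3 : ‖f t1‖^2/r₀ * (G t1 - G s) ≤ ‖f t1‖^2/r₀ * (r₀/2) := by gcongr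
      have c4 : ‖f t1‖^2/r₀ * (r₀/2) = ‖f t1‖^2/2 := by field_simp
      have c5 := hmax' t (right_mem_Icc.2 ht2.1.le)
      have c6 : ‖f t‖^2 ≤ 0 := by nlinarith
      have c7 : ‖f t‖ = 0 := by nlinarith [norm_nonneg (f t)]
      exact norm_eq_zero.1 c7
  intro t ht
  have : x t - x' t = 0 := hsub ht
  exact (sub_eq_zero.1 this).symm

end Uniqueness

/-- Lions–Sznitman. If `D` is a bounded domain in `ℝ^d` satisfying
conditions (A) and (D), then for every continuous `h : [0,∞) → ℝ^d` with `h 0 ∈ closure D`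
there is a unique pair `(x, k)` solving the Skorohod problem `(h, D, 𝒩)`. -/
theorem skorohod_existence_uniqueness
    {d : ℕ} (D : Set (Ed d)) (hD_open : IsOpen D) (hD_conn : IsConnected D)
    (hD_bdd : Bornology.IsBounded D)
    (r₀ : ℝ) (hA : CondA D r₀)
    (m : ℕ) (lam R : ℝ) (a xs : Fin m → Ed d) (hDD : CondD D m lam R a xs)
    (h : ℝ → Ed d) (hh : ContinuousOn h (Ici 0)) (h0 : h 0 ∈ closure D) :
    ∃ x k : ℝ → Ed d,
      (∀ T > (0:ℝ), IsSkorohodSolution D h x k T) ∧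
      ∀ x' k' : ℝ → Ed d, (∀ T > (0:ℝ), IsSkorohodSolution D h x' k' T) →
        (EqOn x' x (Ici 0) ∧ EqOn k' k (Ici 0)) := by
  have hr := hA.1
  set g : ℝ → Ed d := fun t => h (max t 0) with hg
  have hgc : Continuous g := hh.comp_continuous (by fun_prop) (fun t => mem_Ici.2 (le_max_right t 0))
  have hg0 : g 0 = h 0 := by simp [hg]
  have hgn : ∀ t ≤ 0, g t = g 0 := fun t ht => by simp [hg, max_eq_right ht]
  have hgp : ∀ t, 0 ≤ t → g t = h t := fun t ht => by simp [hg, max_eq_left ht]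
  obtain ⟨x, V, hxc, hVc, hVm, hxm, hx0, hxV, hstar⟩ :=
    exists_limit hD_open hD_bdd hA hDD g hgc hgn (by rwa [hg0])
  set k : ℝ → Ed d := fun t => x t - g t with hk
  have hkc : Continuous k := hxc.sub hgc
  have hk0 : ∀ t ≤ 0, k t = 0 := fun t ht => by simp [hk, hx0 t ht, hgn t ht]
  obtain ⟨μ, n, w, hn, hμ, hkn, hn1, hw, hlim⟩ := exists_reflect k V hkc hVc hVm hxV hk0
  have hsol : ∀ T > (0:ℝ), IsSkorohodSolution D h x k T := by
    intro T hT
    refine ⟨h0, ?_, hxc.continuousOn, fun t _ => hxm t, by rw [hx0 0 le_rfl, hg0],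
      hkc.continuousOn, hk0 0 le_rfl, ?_, μ, n, hn, fun t ht => hμ t ht.1, fun t ht => hkn t ht.1, ?_⟩
    · intro t ht
      simp [hk, hgp t ht.1]
    · exact ((evar_le k V 0 T hT.le fun s t _ h _ => hxV s t h).trans_lt ENNReal.ofReal_lt_top).ne
    · filter_upwards [hn1 T hT.le, ae_restrict_of_ae hlim] with u hu1 hu2
      obtain ⟨c, hc1, hc2⟩ := hu2
      have hc0 : 0 ≤ c := by
        refine ge_of_tendsto hc2 ?_
        filter_upwards [self_mem_nhdsWithin] with r hr
        have hr' : (0:ℝ) < r := hr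
        exact mul_nonneg (hw u r) (sub_nonneg.2 (hVm (by linarith)))
      have hprox : ∀ y ∈ D, 0 ≤ ⟪y - x u, n u⟫ + ‖y - x u‖^2 * (c/(2*r₀) + 1) := by
        intro y hy
        have heta : ∀ η > 0, 0 ≤ ⟪y - x u, n u⟫ + (‖y - x u‖^2/(2*r₀) + η) * c := by
          intro η hη
          obtain ⟨δ, hδ, H⟩ := hstar u η hη
          have l1 := ((tendsto_const_nhds (x := y - x u)).inner (𝕜 := ℝ) hc1).add
            (hc2.const_mul (‖y - x u‖^2/(2*r₀) + η))
          refine ge_of_tendsto l1 ?_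
          filter_upwards [Ioc_mem_nhdsGT hδ] with r hr
          have h1 := mul_nonneg (hw u r) (H r hr.1 hr.2 y (subset_closure hy))
          rw [inner_smul_right]
          simp only [hk]
          linarith
        have l2 : Filter.Tendsto (fun η : ℝ => ⟪y - x u, n u⟫ + (‖y - x u‖^2/(2*r₀) + η) * c)
            (nhdsWithin 0 (Ioi 0)) (nhds (⟪y - x u, n u⟫ + (‖y - x u‖^2/(2*r₀) + 0) * c)) := by
          refine Filter.Tendsto.mono_left ?_ nhdsWithin_le_nhds
          exact Continuous.tendsto (by fun_prop) 0
        have l3 : 0 ≤ ⟪y - x u, n u⟫ + (‖y - x u‖^2/(2*r₀) + 0) * c := by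
          refine ge_of_tendsto l2 ?_
          filter_upwards [self_mem_nhdsWithin] with η hη using heta η hη
        have l4 : (‖y - x u‖^2/(2*r₀) + 0) * c = ‖y - x u‖^2 * (c/(2*r₀)) := by ring
        rw [l4] at l3
        nlinarith [sq_nonneg ‖y - x u‖]
      have hnor := normalCone_of_prox (by positivity) hu1 hprox
      exact ⟨frontier_of_inwardNormal hD_open (hxm u) hnor, hnor⟩
  refine ⟨x, k, hsol, fun x' k' hsol' => ?_⟩
  have hx' : EqOn x' x (Ici 0) := by
    intro t ht
    have ht0 : (0:ℝ) ≤ t := ht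
    have hT : (0:ℝ) < t + 1 := by linarith
    exact sol_unique hA hT (hsol _ hT) (hsol' _ hT) t ⟨ht0, by linarith⟩
  refine ⟨hx', fun t ht => ?_⟩
  have ht0 : (0:ℝ) ≤ t := ht
  have hT : (0:ℝ) < t + 1 := by linarith
  have e1 := (hsol _ hT).decomp t ⟨ht0, by linarith⟩
  have e2 := (hsol' _ hT).decomp t ⟨ht0, by linarith⟩
  rw [hx' ht, e1] at e2
  exact (add_left_cancel e2).symm


end
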